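/- arXiv:1311.1242 — 2 statements merged into one kernel-verified Lean document; each statement's English description precedes it below -/
import Mathlib

section
/- For every positive braid β on 4 strands, −σ(β) ≥ (5/12)·b₁(β) − 7/4. -/
/-- The braid relations on `b` strands, as elements of the free group on the
Artin generators `a_1, …, a_{b-1}` (indexed by `Fin (b-1)`): the generators
`a_i` and `a_j` commute for `|i - j| ≥ 2` and braid for `|i - j| = 1`. -/
def braidRels (b : ℕ) : Set (FreeGroup (Fin (b - 1))) :=
  {r | (∃ i j : Fin (b - 1), (i : ℕ) + 2 ≤ (j : ℕ) ∧
          r = FreeGroup.of i * FreeGroup.of j * (FreeGroup.of i)⁻¹ * (FreeGroup.of j)⁻¹) ∨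
       (∃ i j : Fin (b - 1), (j : ℕ) = (i : ℕ) + 1 ∧
          r = FreeGroup.of i * FreeGroup.of j * FreeGroup.of i *
                (FreeGroup.of j * FreeGroup.of i * FreeGroup.of j)⁻¹)}

/-- The braid group `B_b` on `b` strands, presented by the Artin generators and relations. -/
def BraidGroup (b : ℕ) : Type := PresentedGroup (braidRels b)

instance (b : ℕ) : Group (BraidGroup b) :=
  inferInstanceAs (Group (PresentedGroup (braidRels b)))

/-- The Artin generator `a_{i+1}` of the braid group `B_b`. -/
def braidGen (b : ℕ) (i : Fin (b - 1)) : BraidGroup b := PresentedGroup.of i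

/-- The positive braid represented by a positive braid word (a list of letters,
the letter `i : Fin (b-1)` standing for the Artin generator `a_{i+1}`).
A braid `β` is positive of length `ℓ` if and only if `β = wordProd b w` for some
(equivalently, every) word `w` with `w.length = ℓ`. -/
def wordProd (b : ℕ) (w : List (Fin (b - 1))) : BraidGroup b :=
  (w.map (braidGen b)).prod

/-- Background data: the signature `σ` and first Betti number `b₁` of the closures of
braids, together with standard facts about them.  `sigma b β` is the signature of the
closure of `β ∈ B_b` (with the sign convention `σ(closure of a_1^n) = -n + 1`), and
`betti b β` is the minimal first Betti number of a Seifert surface for the closure. -/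
structure BraidLinkInvariants where
  sigma : ∀ b : ℕ, BraidGroup b → ℤ
  betti : ∀ b : ℕ, BraidGroup b → ℕ
  /-- Conjugate braids have the same closure, hence the same signature. -/
  sigma_conj : ∀ (b : ℕ) (α β : BraidGroup b), sigma b (α * β) = sigma b (β * α)
  /-- Conjugate braids have the same closure, hence the same first Betti number. -/
  betti_conj : ∀ (b : ℕ) (α β : BraidGroup b), betti b (α * β) = betti b (β * α)
  /-- The closure of the trivial braid is an unlink, which has signature `0`. -/
  sigma_one : ∀ b : ℕ, sigma b 1 = 0
  /-- Sign convention: the signature of the closure of `a_i ^ n` is `-n + 1`. -/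
  sigma_gen_pow : ∀ (b : ℕ) (i : Fin (b - 1)) (n : ℕ), 1 ≤ n →
      sigma b (braidGen b i ^ n) = 1 - (n : ℤ)
  /-- Adding or deleting one generator in a braid word changes the signature by at most `1`. -/
  sigma_insert : ∀ (b : ℕ) (α β : BraidGroup b) (i : Fin (b - 1)),
      |sigma b (α * braidGen b i * β) - sigma b (α * β)| ≤ 1
  /-- The signature is a quasimorphism of defect `b - 1` on `B_b`. -/
  sigma_quasi : ∀ (b : ℕ), 1 ≤ b → ∀ α β : BraidGroup b,
      |sigma b (α * β) - sigma b α - sigma b β| ≤ (b : ℤ) - 1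
  /-- Bennequin's formula: `b₁(β) = ℓ(β) - b + c(β)` for a positive braid `β`, where
  `c(β)` is `1` plus the number of Artin generators not appearing in a positive word for `β`. -/
  betti_eq : ∀ (b : ℕ), 1 ≤ b → ∀ w : List (Fin (b - 1)),
      (betti b (wordProd b w) : ℤ) = (w.length : ℤ) - (b : ℤ) +
        (1 + ((Finset.univ.filter (fun i : Fin (b - 1) => i ∉ w)).card : ℤ))

/-- A group with three generators satisfying the relations of the braid group on four strands,
with a conjugation-invariant integer function having the formal properties of the signature. -/
structure FourBraidSignature (G : Type*) [Group G] where
  gen : Fin 3 → G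
  gen_comm : gen 2 * gen 0 = gen 0 * gen 2
  braid_zero_one : gen 1 * gen 0 * gen 1 = gen 0 * gen 1 * gen 0
  braid_one_two : gen 2 * gen 1 * gen 2 = gen 1 * gen 2 * gen 1
  sig : G → ℤ
  sig_conj : ∀ x y, sig (x * y) = sig (y * x)
  sig_pow_le : ∀ i (n : ℕ), sig (gen i ^ n) ≤ 1 - n
  sig_le_insert : ∀ x y i, sig (x * y) ≤ sig (x * gen i * y) + 1
  sig_insert_le : ∀ x y i, sig (x * gen i * y) ≤ sig (x * y) + 1
  sig_mul_le : ∀ x y, sig (x * y) ≤ sig x + sig y + 3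
  sig_add_le : ∀ x y, sig x + sig y ≤ sig (x * y) + 3

namespace FourBraidSignature

variable {G : Type*} [Group G] (T : FourBraidSignature G)

/-- The symmetry of the Dynkin diagram, exchanging the two outer generators. -/
def flip : FourBraidSignature G where
  gen i := T.gen i.rev
  gen_comm := T.gen_comm.symm
  braid_zero_one := T.braid_one_two.symm
  braid_one_two := T.braid_zero_one.symm
  sig := T.sig
  sig_conj := T.sig_conj
  sig_pow_le i := T.sig_pow_le i.rev
  sig_le_insert x y i := T.sig_le_insert x y i.rev
  sig_insert_le x y i := T.sig_insert_le x y i.rev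
  sig_mul_le := T.sig_mul_le
  sig_add_le := T.sig_add_le

/-- The element represented by a positive word. -/
def eval (w : List (Fin 3)) : G := (w.map T.gen).prod

/-- The Garside element (positive half twist) on four strands. -/
def garside : G := T.eval [0, 2, 1, 0, 2, 1]

/-- The half twist on the first three strands. -/
def halfTwist : G := T.gen 0 * T.gen 1 * T.gen 0

@[simp] lemma eval_nil : T.eval [] = 1 := rfl

@[simp] lemma eval_cons (i : Fin 3) (w : List (Fin 3)) :
    T.eval (i :: w) = T.gen i * T.eval w := by simp [eval]

@[simp] lemma eval_append (u v : List (Fin 3)) :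
    T.eval (u ++ v) = T.eval u * T.eval v := by simp [eval]

@[simp] lemma eval_replicate (n : ℕ) (i : Fin 3) :
    T.eval (List.replicate n i) = T.gen i ^ n := by simp [eval]

lemma flip_gen (i : Fin 3) : T.flip.gen i = T.gen i.rev := rfl
@[simp] lemma flip_gen_zero : T.flip.gen 0 = T.gen 2 := rfl
@[simp] lemma flip_gen_one : T.flip.gen 1 = T.gen 1 := rfl
@[simp] lemma flip_gen_two : T.flip.gen 2 = T.gen 0 := rfl
@[simp] lemma flip_sig : T.flip.sig = T.sig := rfl

lemma flip_eval (w : List (Fin 3)) : T.flip.eval w = T.eval (w.map Fin.rev) := by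
  induction w with
  | nil => rfl
  | cons i w ih => rw [List.map_cons, eval_cons, eval_cons, ih, flip_gen]

lemma flip_eval_map (w : List (Fin 3)) : T.flip.eval (w.map Fin.rev) = T.eval w := by
  rw [flip_eval, List.map_map]; congr 1
  conv_rhs => rw [← List.map_id w]
  congr 1; funext i; simp

/-! ### Rewriting rules -/

lemma two_zero_mul (x : G) : T.gen 2 * (T.gen 0 * x) = T.gen 0 * (T.gen 2 * x) := by
  rw [← mul_assoc, T.gen_comm, mul_assoc]

lemma one_zero_one : T.gen 1 * (T.gen 0 * T.gen 1) = T.gen 0 * (T.gen 1 * T.gen 0) := by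
  simpa [mul_assoc] using T.braid_zero_one

lemma one_zero_one_mul (x : G) :
    T.gen 1 * (T.gen 0 * (T.gen 1 * x)) = T.gen 0 * (T.gen 1 * (T.gen 0 * x)) := by
  simpa [mul_assoc] using congrArg (· * x) T.braid_zero_one

lemma two_one_two : T.gen 2 * (T.gen 1 * T.gen 2) = T.gen 1 * (T.gen 2 * T.gen 1) := by
  simpa [mul_assoc] using T.braid_one_two

lemma two_one_two_mul (x : G) :
    T.gen 2 * (T.gen 1 * (T.gen 2 * x)) = T.gen 1 * (T.gen 2 * (T.gen 1 * x)) := by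
  simpa [mul_assoc] using congrArg (· * x) T.braid_one_two

lemma two_one_zero_two_mul (x : G) :
    T.gen 2 * (T.gen 1 * (T.gen 0 * (T.gen 2 * x))) =
      T.gen 1 * (T.gen 2 * (T.gen 1 * (T.gen 0 * x))) := by
  rw [← two_zero_mul, two_one_two_mul]

lemma garside_eq : T.garside =
    T.gen 0 * (T.gen 2 * (T.gen 1 * (T.gen 0 * (T.gen 2 * T.gen 1)))) := by
  simp [garside]

lemma garside_mul_zero : T.garside * T.gen 0 = T.gen 2 * T.garside := by
  simp only [garside_eq, mul_assoc, two_zero_mul, one_zero_one, one_zero_one_mul,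
    two_one_zero_two_mul]

lemma garside_mul_one : T.garside * T.gen 1 = T.gen 1 * T.garside := by
  simp only [garside_eq, mul_assoc, two_zero_mul, one_zero_one_mul, two_one_zero_two_mul]

lemma flip_garside : T.flip.garside = T.garside := by
  simp only [garside_eq, flip_gen_zero, flip_gen_one, flip_gen_two, two_zero_mul, one_zero_one,
    two_one_zero_two_mul]

lemma garside_mul_two : T.garside * T.gen 2 = T.gen 0 * T.garside := by
  simpa [flip_garside] using T.flip.garside_mul_zero

lemma garside_mul_gen (i : Fin 3) : T.garside * T.gen i = T.gen i.rev * T.garside := by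
  fin_cases i
  exacts [T.garside_mul_zero, T.garside_mul_one, T.garside_mul_two]

lemma garside_mul_eval (w : List (Fin 3)) :
    T.garside * T.eval w = T.eval (w.map Fin.rev) * T.garside := by
  induction w with
  | nil => simp
  | cons i w ih =>
    rw [List.map_cons, eval_cons, eval_cons, ← mul_assoc, garside_mul_gen, mul_assoc, ih,
      mul_assoc]

lemma eval_mul_garside_pow (e : ℕ) (w : List (Fin 3)) :
    ∃ w' : List (Fin 3), w'.length = w.length ∧
      T.eval w * T.garside ^ e = T.garside ^ e * T.eval w' := by
  induction e with
  | zero => exact ⟨w, rfl, by simp⟩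
  | succ e ih =>
    obtain ⟨v, hv, h⟩ := ih
    refine ⟨v.map Fin.rev, by simpa using hv, ?_⟩
    have hr : T.eval v * T.garside = T.garside * T.eval (v.map Fin.rev) := by
      rw [garside_mul_eval, List.map_map]
      congr 2
      conv_lhs => rw [← List.map_id v]
      congr 1; funext i; simp
    rw [pow_succ, ← mul_assoc, h, mul_assoc, hr, mul_assoc]

lemma semiconj_halfTwist_zero : SemiconjBy T.halfTwist (T.gen 0) (T.gen 1) := by
  simp only [SemiconjBy, halfTwist, mul_assoc, one_zero_one_mul]

lemma semiconj_halfTwist_one : SemiconjBy T.halfTwist (T.gen 1) (T.gen 0) := by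
  simp only [SemiconjBy, halfTwist, mul_assoc, one_zero_one]

lemma commute_zero_two : Commute (T.gen 0) (T.gen 2) := T.gen_comm.symm

/-! ### Comparison of signatures up to a bounded error -/

/-- Replacing `x` by `y` inside any product decreases the signature by at most `n`. -/
def CostLe (n : ℕ) (x y : G) : Prop :=
  ∀ u v, T.sig (u * x * v) ≤ T.sig (u * y * v) + n

variable {T}

lemma CostLe.refl (x : G) : T.CostLe 0 x x := fun u v => by simp

lemma CostLe.trans {m n : ℕ} {x y z : G} (h : T.CostLe m x y) (h' : T.CostLe n y z) :
    T.CostLe (m + n) x z := fun u v => by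
  have := h u v
  have := h' u v
  push_cast; linarith

lemma CostLe.mul_mul {n : ℕ} {x y : G} (h : T.CostLe n x y) (s t : G) :
    T.CostLe n (s * x * t) (s * y * t) := fun u v => by
  simpa [mul_assoc] using h (u * s) (t * v)

lemma CostLe.mul {m n : ℕ} {x y x' y' : G} (h : T.CostLe m x y) (h' : T.CostLe n x' y') :
    T.CostLe (m + n) (x * x') (y * y') := by
  have h1 := h.mul_mul 1 x'
  have h2 := h'.mul_mul y 1
  simp only [one_mul, mul_one] at h1 h2
  exact h1.trans h2

lemma CostLe.pow {n : ℕ} {x y : G} (h : T.CostLe n x y) (k : ℕ) :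
    T.CostLe (n * k) (x ^ k) (y ^ k) := by
  induction k with
  | zero => simpa using CostLe.refl (1 : G)
  | succ k ih => simpa only [pow_succ, mul_add, mul_one] using ih.mul h

lemma CostLe.sig_le {n : ℕ} {x y : G} (h : T.CostLe n x y) : T.sig x ≤ T.sig y + n := by
  simpa using h 1 1

variable (T)

lemma costLe_one_gen (i : Fin 3) : T.CostLe 1 1 (T.gen i) := fun u v => by
  simpa using T.sig_le_insert u v i

lemma costLe_gen_one (i : Fin 3) : T.CostLe 1 (T.gen i) 1 := fun u v => by
  simpa using T.sig_insert_le u v i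

/-! ### Signatures of powers of half twists -/

lemma sig_outer_le (p q : ℕ) : T.sig (T.gen 0 ^ p * T.gen 2 ^ q) ≤ 5 - p - q := by
  have := T.sig_mul_le (T.gen 0 ^ p) (T.gen 2 ^ q)
  have := T.sig_pow_le 0 p
  have := T.sig_pow_le 2 q
  linarith

lemma sig_garside_pow_le (k : ℕ) : T.sig (T.garside ^ k) ≤ 9 - 4 * k := by
  set x := T.gen 0 * T.gen 2 * T.gen 1 * T.gen 0 * T.gen 2 with hx
  have hg : T.garside = x * T.gen 1 := by simp [garside_eq, hx, mul_assoc]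
  have hc : Commute x (T.gen 1) := by
    have h := T.garside_mul_one
    rw [hg, ← mul_assoc] at h
    exact mul_right_cancel h
  have h1 : T.CostLe 1 x (T.gen 0 ^ 2 * T.gen 2 ^ 2) := by
    have := (T.costLe_gen_one 1).mul_mul (T.gen 0 * T.gen 2) (T.gen 0 * T.gen 2)
    simpa only [hx, pow_two, mul_assoc, one_mul, mul_one, two_zero_mul] using this
  have h2 := (h1.pow k).sig_le
  rw [(T.commute_zero_two.pow_pow 2 2).mul_pow k, ← pow_mul, ← pow_mul] at h2
  have h3 := T.sig_outer_le (2 * k) (2 * k)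
  have h4 := T.sig_mul_le (x ^ k) (T.gen 1 ^ k)
  have h5 := T.sig_pow_le 1 k
  rw [hg, hc.mul_pow]
  push_cast at *
  linarith

lemma sig_halfTwist_pow_even_le (k : ℕ) : T.sig (T.halfTwist ^ (2 * k)) ≤ 5 - 4 * k := by
  set x := T.gen 0 * T.gen 1 * T.gen 0 ^ 3 with hx
  set z := (T.gen 0)⁻¹ * T.gen 1 * T.gen 0 with hz
  have hg : T.halfTwist ^ 2 = x * z := by
    simp only [hx, hz, halfTwist, pow_succ, pow_zero, one_mul, mul_assoc, mul_inv_cancel_left]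
  have hcomm : Commute (T.halfTwist ^ 2) z := by
    have h0 : Commute (T.halfTwist ^ 2) (T.gen 0) := by
      rw [pow_two]; exact T.semiconj_halfTwist_one.mul_left T.semiconj_halfTwist_zero
    have h1 : Commute (T.halfTwist ^ 2) (T.gen 1) := by
      rw [pow_two]; exact T.semiconj_halfTwist_zero.mul_left T.semiconj_halfTwist_one
    exact (h0.inv_right.mul_right h1).mul_right h0
  have hc : Commute x z := by
    rw [hg] at hcomm
    have h : x * z * z = z * x * z := hcomm.eq.trans (mul_assoc _ _ _).symm
    exact mul_right_cancel h
  have h1 : T.CostLe 1 x (T.gen 0 ^ 4) := by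
    have := (T.costLe_gen_one 1).mul_mul (T.gen 0) (T.gen 0 ^ 3)
    simpa only [hx, mul_one, ← pow_succ'] using this
  have h2 := (h1.pow k).sig_le
  rw [← pow_mul] at h2
  have h3 := T.sig_pow_le 0 (4 * k)
  have h4 := T.sig_mul_le (x ^ k) (z ^ k)
  have h5 : T.sig (z ^ k) = T.sig (T.gen 1 ^ k) := by
    have : z ^ k = (T.gen 0)⁻¹ * T.gen 1 ^ k * T.gen 0 := by
      have := conj_pow (a := (T.gen 0)⁻¹) (b := T.gen 1) (i := k)
      rwa [inv_inv] at this
    rw [this, T.sig_conj, mul_inv_cancel_left]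
  have h6 := T.sig_pow_le 1 k
  rw [pow_mul, hg, hc.mul_pow]
  push_cast at *
  linarith

lemma sig_halfTwist_pow_le (j : ℕ) : T.sig (T.halfTwist ^ j) ≤ 10 - 2 * j := by
  obtain ⟨k, rfl | rfl⟩ := j.even_or_odd'
  · have := T.sig_halfTwist_pow_even_le k
    push_cast; linarith
  · have h := ((T.costLe_gen_one 0).mul (T.costLe_gen_one 1)).mul (T.costLe_gen_one 0)
    have h1 := (h.mul_mul (T.halfTwist ^ (2 * k)) 1).sig_le
    have := T.sig_halfTwist_pow_even_le k
    simp only [mul_one] at h1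
    rw [pow_succ]
    change T.sig (T.halfTwist ^ (2 * k) * T.halfTwist) ≤ _ at h1
    push_cast at *; linarith

/-! ### Three-strand words -/

lemma three_strand_aux (i j : Fin 3) (hij : i = 0 ∧ j = 1 ∨ i = 1 ∧ j = 0) :
    T.gen i * T.gen j * T.gen i = T.halfTwist ∧
      SemiconjBy T.halfTwist (T.gen j) (T.gen i) := by
  rcases hij with ⟨rfl, rfl⟩ | ⟨rfl, rfl⟩
  · exact ⟨rfl, T.semiconj_halfTwist_one⟩
  · exact ⟨T.braid_zero_one, T.semiconj_halfTwist_zero⟩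

lemma three_strand_state_le (z : List (Fin 3)) (hz : 2 ∉ z) (i j : Fin 3)
    (hij : i = 0 ∧ j = 1 ∨ i = 1 ∧ j = 0) (m n : ℕ) :
    2 * T.sig (T.halfTwist ^ m * T.gen i ^ n * T.eval z) + 4 * m + n + z.length ≤ 28 := by
  induction z generalizing i j m n with
  | nil =>
    have h1 := T.sig_mul_le (T.halfTwist ^ m) (T.gen i ^ n)
    have h2 := T.sig_pow_le i n
    have h3 := T.sig_halfTwist_pow_le m
    simp only [eval_nil, mul_one, List.length_nil]
    push_cast; linarith
  | cons x z ih =>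
    have hz' : 2 ∉ z := fun h => hz (List.mem_cons_of_mem _ h)
    have hx : x = i ∨ x = j := by
      have : x ≠ 2 := fun h => hz (h ▸ List.mem_cons_self)
      revert hij this; clear hz ih; revert x i j; decide
    rcases hx with rfl | rfl
    · have := ih hz' x j hij m (n + 1)
      rw [eval_cons, ← mul_assoc, mul_assoc (T.halfTwist ^ m), ← pow_succ]
      push_cast [List.length_cons] at *; linarith
    · cases n with
      | zero =>
        have := ih hz' x i (by tauto) m 1
        rw [pow_zero, mul_one, eval_cons, ← mul_assoc]
        simp only [pow_one] at this
        push_cast [List.length_cons] at *; linarith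
      | succ n =>
        have h := ih hz' x i (by tauto) (m + 1) n
        obtain ⟨h1, h2⟩ := T.three_strand_aux i x hij
        have h3 := T.costLe_one_gen i (T.halfTwist ^ m * T.gen i ^ (n + 1) * T.gen x) (T.eval z)
        have h4 : T.halfTwist ^ m * T.gen i ^ (n + 1) * T.gen x * T.gen i =
            T.halfTwist ^ (m + 1) * T.gen x ^ n := by
          rw [pow_succ, pow_succ (T.halfTwist), mul_assoc (T.halfTwist ^ m) T.halfTwist,
            (h2.pow_right n).eq, ← h1]
          simp only [mul_assoc]
        rw [h4, mul_one] at h3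
        rw [eval_cons, ← mul_assoc]
        push_cast [List.length_cons] at *; linarith

lemma three_strand_sig_le (z : List (Fin 3)) (hz : 2 ∉ z) :
    2 * T.sig (T.eval z) + z.length ≤ 28 := by
  simpa using T.three_strand_state_le z hz 0 1 (.inl ⟨rfl, rfl⟩) 0 0

/-! ### Edits of positive words -/

/-- Apply a braid relation at the given position of a word, if there is one. -/
def applyRel : ℕ → List (Fin 3) → List (Fin 3)
  | 0, [x, y] => if x ≠ y ∧ x = y.rev then [y, x] else [x, y]
  | 0, x :: y :: z :: w =>
    if x ≠ y ∧ x = y.rev then y :: x :: z :: w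
    else if x = z ∧ (x = 1 ∨ y = 1) then y :: x :: y :: w
    else x :: y :: z :: w
  | n + 1, x :: w => x :: applyRel n w
  | _, w => w

lemma gen_mul_gen_of_rev (x y : Fin 3) (h : x ≠ y ∧ x = y.rev) :
    T.gen x * T.gen y = T.gen y * T.gen x := by
  have : x = 0 ∧ y = 2 ∨ x = 2 ∧ y = 0 := by revert x y; decide
  rcases this with ⟨rfl, rfl⟩ | ⟨rfl, rfl⟩
  exacts [T.gen_comm.symm, T.gen_comm]

lemma gen_braid (x y : Fin 3) (h : x = 1 ∨ y = 1) :
    T.gen x * T.gen y * T.gen x = T.gen y * T.gen x * T.gen y := by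
  have : x = y ∨ x = 0 ∧ y = 1 ∨ x = 1 ∧ y = 0 ∨ x = 1 ∧ y = 2 ∨ x = 2 ∧ y = 1 := by
    revert x y; decide
  rcases this with rfl | ⟨rfl, rfl⟩ | ⟨rfl, rfl⟩ | ⟨rfl, rfl⟩ | ⟨rfl, rfl⟩
  exacts [rfl, T.braid_zero_one.symm, T.braid_zero_one, T.braid_one_two.symm, T.braid_one_two]

lemma eval_applyRel (n : ℕ) (w : List (Fin 3)) : T.eval (applyRel n w) = T.eval w := by
  induction n generalizing w with
  | zero =>
    match w with
    | [] => rfl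
    | [x] => rfl
    | [x, y] =>
      rw [applyRel]
      split_ifs with h
      · simp [T.gen_mul_gen_of_rev x y h]
      · rfl
    | x :: y :: z :: w =>
      rw [applyRel]
      split_ifs with h h'
      · simp only [eval_cons, ← mul_assoc, T.gen_mul_gen_of_rev x y h]
      · obtain ⟨rfl, h'⟩ := h'
        simp only [eval_cons, ← mul_assoc, T.gen_braid x y h']
      · rfl
  | succ n ih =>
    match w with
    | [] => rfl
    | x :: w => rw [applyRel, eval_cons, eval_cons, ih]

/-- An elementary modification of a positive word. -/
inductive Edit
  | rel (n : ℕ)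
  | ins (n : ℕ) (x : Fin 3)
  | del (n : ℕ)

/-- The word obtained by an elementary modification. -/
def Edit.apply : Edit → List (Fin 3) → List (Fin 3)
  | .rel n, w => applyRel n w
  | .ins n x, w => w.take n ++ x :: w.drop n
  | .del n, w => w.take n ++ w.drop (n + 1)

/-- The number of letters inserted or deleted. -/
def Edit.cost : Edit → ℕ
  | .rel _ => 0
  | _ => 1

lemma costLe_edit (o : Edit) (w : List (Fin 3)) :
    T.CostLe o.cost (T.eval w) (T.eval (o.apply w)) := by
  cases o with
  | rel n => rw [Edit.apply, eval_applyRel]; exact CostLe.refl _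
  | ins n x =>
    have h := (T.costLe_one_gen x).mul_mul (T.eval (w.take n)) (T.eval (w.drop n))
    rw [mul_one, ← eval_append, List.take_append_drop] at h
    simpa [Edit.apply, Edit.cost, mul_assoc] using h
  | del n =>
    rcases lt_or_ge n w.length with hn | hn
    · have h := (T.costLe_gen_one w[n]).mul_mul (T.eval (w.take n)) (T.eval (w.drop (n + 1)))
      rw [mul_one, mul_assoc, ← eval_cons, ← eval_append, List.getElem_cons_drop,
        List.take_append_drop, ← eval_append] at h
      exact h
    · have hd : Edit.apply (.del n) w = w := by
        simp [Edit.apply, List.take_of_length_le hn, List.drop_eq_nil_of_le (hn.trans n.le_succ)]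
      rw [hd]
      intro u v
      simp

lemma costLe_edits (os : List Edit) (w : List (Fin 3)) :
    T.CostLe (os.map Edit.cost).sum (T.eval w)
      (T.eval (os.foldl (fun v o => o.apply v) w)) := by
  induction os generalizing w with
  | nil => exact CostLe.refl _
  | cons o os ih => exact (T.costLe_edit o w).trans (ih _)

/-- Apply braid relations successively at the given positions. -/
def rels (ns : List ℕ) : List Edit := ns.map .rel

/-- A word that can be traded for a power of the Garside element and a shorter word,
at a cost compatible with the slope `5/12`. -/
def Reducible (u : List (Fin 3)) : Prop :=
  ∃ (n e : ℕ) (v : List (Fin 3)), T.CostLe n (T.eval u) (T.garside ^ e * T.eval v) ∧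
    12 * n + 5 * u.length ≤ 48 * e + 5 * v.length ∧ v.length < u.length

/-- The standard word for a power of the Garside element. -/
def garsideWord (e : ℕ) : List (Fin 3) := (List.replicate e [0, 2, 1, 0, 2, 1]).flatten

lemma eval_garsideWord (e : ℕ) : T.eval (garsideWord e) = T.garside ^ e := by
  induction e with
  | zero => simp [garsideWord]
  | succ e ih =>
    rw [garsideWord, List.replicate_succ, List.flatten_cons, eval_append, pow_succ', ← ih]; rfl

lemma reducible_of_edits (os : List Edit) (e : ℕ) (u v : List (Fin 3))
    (h : os.foldl (fun v o => o.apply v) u = garsideWord e ++ v)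
    (hc : 12 * (os.map Edit.cost).sum + 5 * u.length ≤ 48 * e + 5 * v.length)
    (hl : v.length < u.length) : T.Reducible u := by
  refine ⟨_, e, v, ?_, hc, hl⟩
  have := T.costLe_edits os u
  rwa [h, eval_append, eval_garsideWord] at this

/-- Words that are reducible. -/
def reducibleWords : List (List (Fin 3)) :=
  [[0, 1, 0, 2], [1, 2, 0, 1], [2, 0, 1, 0],
    [0, 1, 2, 2, 1, 0, 0, 1, 2, 2, 1],
    [0, 1, 2, 2, 1, 0, 0, 1, 2, 2, 2],
    [1, 2, 2, 1, 0, 0, 1, 1, 0],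
    [0, 1, 2, 2, 1, 0, 0, 1, 1, 2, 2],
    [1, 0, 0, 1, 2, 2, 1, 0, 0, 0, 1, 2, 2, 1],
    [1, 2, 2, 1, 0, 0, 0, 1, 2, 2, 2]]

lemma reducible_of_mem {u : List (Fin 3)} (hu : u ∈ reducibleWords) : T.Reducible u := by
  simp only [reducibleWords, List.mem_cons, List.not_mem_nil, or_false] at hu
  rcases hu with rfl | rfl | rfl | rfl | rfl | rfl | rfl | rfl | rfl
  · exact T.reducible_of_edits ([.ins 0 1, .ins 1 2] ++ rels [2, 0, 2, 3, 1, 0]) 1 _ []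
      (by decide) (by decide) (by decide)
  · exact T.reducible_of_edits ([.ins 0 0, .ins 1 2] ++ rels [3]) 1 _ []
      (by decide) (by decide) (by decide)
  · exact T.reducible_of_edits ([.ins 0 0, .ins 1 1] ++ rels [3, 1, 3]) 1 _ []
      (by decide) (by decide) (by decide)
  · exact T.reducible_of_edits ([.ins 0 2, .ins 1 2, .del 7] ++ rels [1, 0, 2, 6, 5, 8, 6, 4, 3])
      2 _ [] (by decide) (by decide) (by decide)
  · exact T.reducible_of_edits ([.del 5, .ins 7 2, .ins 9 1] ++
      rels [4, 3, 6, 4, 8, 6, 5, 3, 1, 3, 9, 7, 6]) 2 _ []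
      (by decide) (by decide) (by decide)
  · exact T.reducible_of_edits ([.ins 1 0, .ins 8 2] ++
      rels [7, 6, 5, 3, 2, 0, 2, 9, 7, 5, 3, 1, 3]) 1 _ [1, 0, 0, 1, 2]
      (by decide) (by decide) (by decide)
  · exact T.reducible_of_edits ([.del 5, .ins 7 2, .ins 8 2] ++
      rels [4, 3, 6, 4, 8, 6, 5, 3, 1, 3, 9, 7, 6]) 2 _ []
      (by decide) (by decide) (by decide)
  · exact T.reducible_of_edits
      ([.ins 0 0, .ins 1 2, .del 8, .ins 10 1, .ins 11 2, .ins 13 1] ++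
        rels [7, 8, 9, 11, 10, 8, 7, 5, 4, 7, 5, 7, 12, 11, 14, 12, 10, 9]) 3 _ []
      (by decide) (by decide) (by decide)
  · exact T.reducible_of_edits
      ([.ins 6 1, .ins 7 2, .ins 9 1, .ins 11 0, .ins 13 1] ++
        rels [7, 5, 3, 2, 1, 7, 6, 5, 3, 2, 0, 2, 8, 7, 6, 10, 8, 7, 5, 7, 12, 10, 8, 6, 5, 3, 1,
          3, 13, 11, 9, 7, 6]) 2 _ [1, 2, 2, 1]
      (by decide) (by decide) (by decide)

/-! ### Occurrences of subwords up to braid equivalence -/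

/-- Two positive words of the same length representing the same element. -/
def Equivalent (y z : List (Fin 3)) : Prop := y.length = z.length ∧ T.eval y = T.eval z

/-- The word `u` occurs in some word equivalent to `y`. -/
def Occurs (u y : List (Fin 3)) : Prop := ∃ s t, T.Equivalent (s ++ u ++ t) y

/-- None of the words used in the reduction, nor a half twist on three strands, occurs. -/
def Irreducible (y : List (Fin 3)) : Prop :=
  ∀ u ∈ [0, 1, 0] :: reducibleWords, ¬ T.Occurs u y ∧ ¬ T.Occurs (u.map Fin.rev) y

variable {T}

lemma Equivalent.refl (y : List (Fin 3)) : T.Equivalent y y := ⟨rfl, rfl⟩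

lemma Equivalent.symm {y z : List (Fin 3)} (h : T.Equivalent y z) : T.Equivalent z y :=
  ⟨h.1.symm, h.2.symm⟩

lemma Equivalent.trans {x y z : List (Fin 3)} (h : T.Equivalent x y) (h' : T.Equivalent y z) :
    T.Equivalent x z := ⟨h.1.trans h'.1, h.2.trans h'.2⟩

lemma Equivalent.append {x y x' y' : List (Fin 3)} (h : T.Equivalent x y)
    (h' : T.Equivalent x' y') : T.Equivalent (x ++ x') (y ++ y') :=
  ⟨by simp [h.1, h'.1], by simp [h.2, h'.2]⟩

lemma Equivalent.map_rev {y z : List (Fin 3)} (h : T.Equivalent y z) :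
    T.flip.Equivalent (y.map Fin.rev) (z.map Fin.rev) :=
  ⟨by simpa using h.1, by simpa [flip_eval_map] using h.2⟩

lemma map_rev_map_rev (y : List (Fin 3)) : (y.map Fin.rev).map Fin.rev = y := by
  simp [Function.comp_def]

lemma Occurs.congr {u y z : List (Fin 3)} (h : T.Occurs u y) (h' : T.Equivalent y z) :
    T.Occurs u z := by
  obtain ⟨s, t, hst⟩ := h
  exact ⟨s, t, hst.trans h'⟩

lemma Occurs.append_left {u y : List (Fin 3)} (h : T.Occurs u y) (x : List (Fin 3)) :
    T.Occurs u (x ++ y) := by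
  obtain ⟨s, t, hst⟩ := h
  exact ⟨x ++ s, t, by simpa using (Equivalent.refl x).append hst⟩

lemma Occurs.map_rev {u y : List (Fin 3)} (h : T.Occurs u y) :
    T.flip.Occurs (u.map Fin.rev) (y.map Fin.rev) := by
  obtain ⟨s, t, hst⟩ := h
  exact ⟨s.map Fin.rev, t.map Fin.rev, by simpa using hst.map_rev⟩

lemma flip_flip : T.flip.flip = T := by
  simp [flip]

lemma Irreducible.congr {y z : List (Fin 3)} (h : T.Irreducible y) (h' : T.Equivalent y z) :
    T.Irreducible z := fun u hu =>
  ⟨fun ho => (h u hu).1 (ho.congr h'.symm), fun ho => (h u hu).2 (ho.congr h'.symm)⟩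

lemma Irreducible.of_append {x y : List (Fin 3)} (h : T.Irreducible (x ++ y)) :
    T.Irreducible y := fun u hu =>
  ⟨fun ho => (h u hu).1 (ho.append_left x), fun ho => (h u hu).2 (ho.append_left x)⟩

lemma Irreducible.map_rev {y : List (Fin 3)} (h : T.Irreducible y) :
    T.flip.Irreducible (y.map Fin.rev) := fun u hu => by
  refine ⟨fun ho => (h u hu).2 ?_, fun ho => (h u hu).1 ?_⟩
  · simpa only [map_rev_map_rev, flip_flip] using ho.map_rev
  · simpa only [map_rev_map_rev, flip_flip] using ho.map_rev

/-- Membership form of irreducibility for an explicit factorisation. -/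
lemma Irreducible.false_of_factor {y : List (Fin 3)} (h : T.Irreducible y)
    (s u t : List (Fin 3)) (hu : u ∈ [0, 1, 0] :: reducibleWords ∨
      u.map Fin.rev ∈ [0, 1, 0] :: reducibleWords) (hy : T.Equivalent (s ++ u ++ t) y) :
    False := by
  rcases hu with hu | hu
  · exact (h u hu).1 ⟨s, t, hy⟩
  · exact (h _ hu).2 ⟨s, t, by rwa [map_rev_map_rev]⟩

variable (T)

/-- Every word splits off an initial block of outer letters followed by a block of middle
letters. -/
lemma exists_block (y : List (Fin 3)) : ∃ (a c r : ℕ) (z : List (Fin 3)),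
    T.Equivalent y (List.replicate a 0 ++ List.replicate c 2 ++ List.replicate r 1 ++ z) ∧
      z.head? ≠ some 1 ∧ (r = 0 → z = []) ∧ (y.head? = some 1 → a = 0 ∧ c = 0) ∧
      (y.head? ≠ some 1 → y ≠ [] → 1 ≤ a + c) := by
  induction y with
  | nil => exact ⟨0, 0, 0, [], by simp [Equivalent]⟩
  | cons x y ih =>
    obtain ⟨a, c, r, z, h, hz, hr, h1, h2⟩ := ih
    fin_cases x
    · refine ⟨a + 1, c, r, z, ?_, hz, hr, by simp, by simp; omega⟩
      simpa [List.replicate_succ] using (Equivalent.refl [0]).append h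
    · by_cases hy : y.head? = some 1
      · obtain ⟨rfl, rfl⟩ := h1 hy
        refine ⟨0, 0, r + 1, z, ?_, hz, by simp, by simp, by simp⟩
        simpa [List.replicate_succ] using (Equivalent.refl [1]).append h
      · exact ⟨0, 0, 1, y, Equivalent.refl _, hy, by simp, by simp, by simp⟩
    · refine ⟨a, c + 1, r, z, ⟨?_, ?_⟩, hz, hr, by simp, by simp; omega⟩
      · have := h.1
        simp at this ⊢; omega
      · have hc : T.gen 2 * T.gen 0 ^ a = T.gen 0 ^ a * T.gen 2 :=
          (T.commute_zero_two.pow_left a).symm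
        have := h.2
        simp only [eval_append, eval_replicate] at this
        change T.eval (2 :: y) = _
        simp only [eval_cons, eval_append, eval_replicate, this, pow_succ', ← mul_assoc, hc]

/-! ### The scanning potential -/

/-- The potential controlling the signature of `Δ ^ k * a ^ p * c ^ q * y`. -/
def energy (k p q : ℕ) (y : List (Fin 3)) : ℤ :=
  12 * T.sig (T.garside ^ k * T.gen 0 ^ p * T.gen 2 ^ q * T.eval y) +
    48 * k + 12 * (p + q) + 5 * y.length

variable {T} in
lemma Equivalent.energy_eq {y z : List (Fin 3)} (h : T.Equivalent y z) (k p q : ℕ) :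
    T.energy k p q y = T.energy k p q z := by
  rw [energy, energy, h.1, h.2]

lemma energy_flip (k p q : ℕ) (y : List (Fin 3)) :
    T.flip.energy k p q (y.map Fin.rev) = T.energy k q p y := by
  have hc : T.gen 2 ^ p * T.gen 0 ^ q = T.gen 0 ^ q * T.gen 2 ^ p :=
    (T.commute_zero_two.pow_pow q p).symm
  simp only [energy, flip_sig, flip_garside, flip_gen_zero, flip_gen_two, flip_eval_map,
    List.length_map, mul_assoc (T.garside ^ k), hc]
  ring

lemma energy_nil_le (k p q : ℕ) : T.energy k p q [] ≤ 204 := by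
  have h1 := T.sig_mul_le (T.garside ^ k) (T.gen 0 ^ p * T.gen 2 ^ q)
  have h2 := T.sig_outer_le p q
  have h3 := T.sig_garside_pow_le k
  rw [← mul_assoc] at h1
  simp only [energy, eval_nil, mul_one, List.length_nil]
  push_cast; linarith

lemma energy_outer (k p q a c : ℕ) (y : List (Fin 3)) :
    T.energy k p q (List.replicate a 0 ++ List.replicate c 2 ++ y) =
      T.energy k (p + a) (q + c) y - 7 * (a + c) := by
  have hc : T.gen 0 ^ a * T.gen 2 ^ q = T.gen 2 ^ q * T.gen 0 ^ a :=
    (T.commute_zero_two.pow_pow a q).eq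
  have : T.garside ^ k * T.gen 0 ^ p * T.gen 2 ^ q *
      T.eval (List.replicate a 0 ++ List.replicate c 2 ++ y) =
      T.garside ^ k * T.gen 0 ^ (p + a) * T.gen 2 ^ (q + c) * T.eval y := by
    simp only [eval_append, eval_replicate, pow_add, mul_assoc]
    rw [← mul_assoc (T.gen 2 ^ q) (T.gen 0 ^ a), ← hc]
    simp only [mul_assoc]
  simp only [energy, this, List.length_append, List.length_replicate]
  push_cast; ring

lemma energy_middle_le (k p q : ℕ) (y : List (Fin 3)) :
    T.energy k p q (1 :: y) ≤ T.energy k p q y + 17 := by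
  have := T.costLe_gen_one 1 (T.garside ^ k * T.gen 0 ^ p * T.gen 2 ^ q) (T.eval y)
  simp only [energy, eval_cons, List.length_cons]
  rw [← mul_assoc (_ * _) (T.gen 1)]
  rw [mul_one] at this
  push_cast at *; linarith

lemma energy_le_insert (k p q : ℕ) (y : List (Fin 3)) :
    T.energy k p q y ≤ T.energy k (p + 1) q y := by
  have := T.costLe_one_gen 0 (T.garside ^ k * T.gen 0 ^ p) (T.gen 2 ^ q * T.eval y)
  simp only [energy, pow_succ]
  simp only [mul_assoc, mul_one] at *
  push_cast at *; linarith

lemma costLe_zero_middle (r : ℕ) :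
    T.CostLe 3 (T.gen 0 * T.gen 1 ^ (r + 2)) (T.gen 2 ^ r * T.garside) := by
  have h : T.gen 0 * (T.gen 1 * T.gen 2) * T.gen 1 ^ (r + 1) * T.gen 0 * T.gen 1 =
      T.gen 2 ^ r * T.garside := by
    have hs : SemiconjBy (T.gen 0 * (T.gen 1 * T.gen 2)) (T.gen 1) (T.gen 2) := by
      simp only [SemiconjBy, mul_assoc, ← two_one_two, two_zero_mul]
    have hg : T.gen 0 * (T.gen 1 * T.gen 2) * (T.gen 1 * T.gen 0 * T.gen 1) = T.garside := by
      simp only [garside_eq, mul_assoc, two_zero_mul, one_zero_one, two_one_zero_two_mul]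
    rw [pow_succ, ← hg, ← mul_assoc (T.gen 2 ^ r), ← (hs.pow_right r).eq]
    simp only [mul_assoc]
  have h1 := ((T.costLe_one_gen 1).mul (T.costLe_one_gen 2)).mul_mul (T.gen 0)
    (T.gen 1 ^ (r + 1) * T.gen 1)
  have h2 := (T.costLe_one_gen 0).mul_mul (T.gen 0 * (T.gen 1 * T.gen 2) * T.gen 1 ^ (r + 1))
    (T.gen 1)
  rw [h] at h2
  simp only [mul_one, ← pow_succ] at h1
  rw [mul_one, mul_assoc, ← pow_succ] at h2
  exact h1.trans h2

lemma energy_middle_block_le (k p q r : ℕ) (y : List (Fin 3)) :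
    T.energy k (p + 1) q (List.replicate (r + 2) 1 ++ y) ≤
      T.energy (k + 1) (q + r) p y + 10 - 7 * r := by
  have h := T.costLe_zero_middle r (T.garside ^ k * T.gen 0 ^ p * T.gen 2 ^ q) (T.eval y)
  have hc : T.gen 0 * T.gen 2 ^ q = T.gen 2 ^ q * T.gen 0 :=
    (T.commute_zero_two.pow_right q).eq
  have h1 : T.garside ^ k * T.gen 0 ^ (p + 1) * T.gen 2 ^ q *
      T.eval (List.replicate (r + 2) 1 ++ y) = T.garside ^ k * T.gen 0 ^ p * T.gen 2 ^ q *
        (T.gen 0 * T.gen 1 ^ (r + 2)) * T.eval y := by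
    rw [pow_succ (T.gen 0), eval_append, eval_replicate]
    simp only [mul_assoc]
    rw [← mul_assoc (T.gen 0) (T.gen 2 ^ q), hc]
    simp only [mul_assoc]
  have hs : SemiconjBy T.garside (T.gen 0) (T.gen 2) := T.garside_mul_zero
  have hs' : SemiconjBy T.garside (T.gen 2) (T.gen 0) := T.garside_mul_two
  have h2 : T.garside ^ k * T.gen 0 ^ p * T.gen 2 ^ q * (T.gen 2 ^ r * T.garside) * T.eval y =
      T.garside ^ (k + 1) * T.gen 0 ^ (q + r) * T.gen 2 ^ p * T.eval y := by
    have h3 : T.gen 0 ^ p * T.gen 2 ^ (q + r) * T.garside =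
        T.garside * (T.gen 0 ^ (q + r) * T.gen 2 ^ p) := by
      rw [((T.commute_zero_two.pow_pow (q + r) p)).eq]
      exact ((hs'.pow_right p).mul_right (hs.pow_right (q + r))).eq.symm
    rw [pow_succ T.garside, mul_assoc (_ ^ k) _ (_ ^ (q + r)), mul_assoc (_ ^ k) _ (_ ^ p),
      mul_assoc T.garside, ← h3, pow_add]
    simp only [mul_assoc]
  rw [h2] at h
  simp only [energy, h1, List.length_append, List.length_replicate]
  push_cast at *; linarith

lemma exists_energy_middle_block_le (k p q r : ℕ) (y : List (Fin 3)) (hr : 1 ≤ r)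
    (h : 1 ≤ p + q) : ∃ k' p' q', T.energy k p q (List.replicate r 1 ++ y) ≤
      T.energy k' p' q' y + 24 - 7 * r := by
  obtain rfl | ⟨s, rfl⟩ : r = 1 ∨ ∃ s, r = s + 2 := by
    rcases r with _ | _ | s
    exacts [absurd hr (by norm_num), .inl rfl, .inr ⟨s, rfl⟩]
  · exact ⟨k, p, q, by simpa [add_sub_assoc] using T.energy_middle_le k p q y⟩
  · rcases p with _ | p
    · obtain ⟨q, rfl⟩ : ∃ q', q = q' + 1 := ⟨q - 1, by omega⟩
      have := T.flip.energy_middle_block_le k q 0 s (y.map Fin.rev)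
      refine ⟨k + 1, q, 0 + s, ?_⟩
      rw [energy_flip] at this
      have hm : List.replicate (s + 2) 1 ++ y.map Fin.rev =
          (List.replicate (s + 2) 1 ++ y).map Fin.rev := by simp
      rw [hm, energy_flip] at this
      push_cast at *; linarith
    · refine ⟨k + 1, q + s, p, ?_⟩
      have := T.energy_middle_block_le k p q s y
      push_cast at *; linarith

lemma exists_energy_block_le (k p q a c r : ℕ) (z : List (Fin 3)) (hr : 1 ≤ r)
    (h : 1 ≤ a + c) : ∃ k' p' q', T.energy k p q
      (List.replicate a 0 ++ List.replicate c 2 ++ List.replicate r 1 ++ z) ≤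
      T.energy k' p' q' z + 24 - 7 * (r + a + c) := by
  obtain ⟨k', p', q', h'⟩ :=
    T.exists_energy_middle_block_le k (p + a) (q + c) r z hr (by omega)
  refine ⟨k', p', q', ?_⟩
  rw [List.append_assoc (_ ++ _), energy_outer]
  linarith

/-! ### Scanning an irreducible word -/

/-- After a middle letter, an irreducible word is either controlled directly or starts with a
large block. -/
lemma energy_le_or_exists_block {y : List (Fin 3)} (hy : y.head? ≠ some 1)
    (hI : T.Irreducible (1 :: y)) : (∀ k p q, T.energy k p q y ≤ 204) ∨
      ∃ a c r z, T.Equivalent y (List.replicate a 0 ++ List.replicate c 2 ++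
        List.replicate (r + 1) 1 ++ z) ∧ z.head? ≠ some 1 ∧ 2 ≤ a + c ∧ (a = 1 → c ≠ 1) := by
  obtain ⟨a, c, r, z, h, hz, hr, -, h2⟩ := T.exists_block y
  rcases eq_or_ne y [] with rfl | hne
  · exact .inl fun k p q => T.energy_nil_le k p q
  have hac := h2 hy hne
  rcases r with _ | r
  · left; intro k p q
    obtain rfl := hr rfl
    rw [h.energy_eq, List.append_assoc (_ ++ _), energy_outer]
    have := T.energy_nil_le k (p + a) (q + c)
    simp only [List.replicate_zero, List.append_nil]
    linarith
  · right
    refine ⟨a, c, r, z, h, hz, ?_, ?_⟩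
    · by_contra hlt
      obtain ⟨rfl, rfl⟩ | ⟨rfl, rfl⟩ : (a = 1 ∧ c = 0) ∨ (a = 0 ∧ c = 1) := by omega
      · refine hI.false_of_factor [] [0, 1, 0] (List.replicate r 1 ++ z) (by decide)
          (.trans ⟨?_, ?_⟩ (((Equivalent.refl [1]).append h).symm))
        · simp; omega
        · simp [pow_succ', mul_assoc, one_zero_one_mul]
      · refine hI.false_of_factor [] [2, 1, 2] (List.replicate r 1 ++ z) (by decide)
          (.trans ⟨?_, ?_⟩ (((Equivalent.refl [1]).append h).symm))
        · simp; omega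
        · simp [pow_succ', mul_assoc, two_one_two_mul]
    · rintro rfl rfl
      refine hI.false_of_factor [] [1, 2, 0, 1] (List.replicate r 1 ++ z) (by decide)
        (.trans ⟨?_, ?_⟩ (((Equivalent.refl [1]).append h).symm))
      · simp; omega
      · simp [pow_succ', mul_assoc, two_zero_mul]

variable {T} in
lemma Irreducible.append_congr {s y z : List (Fin 3)} (hI : T.Irreducible (s ++ y))
    (h : T.Equivalent y z) : T.Irreducible (s ++ z) :=
  hI.congr ((Equivalent.refl s).append h)

lemma Equivalent.outer_comm (a c : ℕ) (z : List (Fin 3)) :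
    T.Equivalent (List.replicate a 0 ++ List.replicate c 2 ++ z)
      (List.replicate c 2 ++ List.replicate a 0 ++ z) :=
  ⟨by simp; omega, by simp only [eval_append, eval_replicate, (T.commute_zero_two.pow_pow a c).eq]⟩

lemma energy_le_of_irreducible_append {y : List (Fin 3)} (k p q : ℕ) (hy : y.head? ≠ some 1)
    (hI : T.Irreducible ([1, 0, 0, 1, 2, 2, 1, 0, 0, 1] ++ y)) : T.energy k p q y ≤ 204 := by
  obtain h | ⟨a, c, r, z, h, -, hac, -⟩ := T.energy_le_or_exists_block hy
    (Irreducible.of_append (x := [1, 0, 0, 1, 2, 2, 1, 0, 0]) hI)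
  · exact h k p q
  exfalso
  replace hI := hI.append_congr h
  rcases a with _ | a
  · obtain ⟨c, rfl⟩ : ∃ c', c = c' + 2 := ⟨c - 2, by omega⟩
    rcases c with _ | c
    · exact hI.false_of_factor [1, 0] [0, 1, 2, 2, 1, 0, 0, 1, 2, 2, 1] (List.replicate r 1 ++ z)
        (by decide) (.refl _)
    · exact hI.false_of_factor [1, 0] [0, 1, 2, 2, 1, 0, 0, 1, 2, 2, 2]
        (List.replicate c 2 ++ List.replicate (r + 1) 1 ++ z) (by decide)
        (by simpa [List.replicate_succ] using Equivalent.refl _)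
  · exact hI.false_of_factor [1, 0, 0, 1, 2, 2, 1, 0] [0, 1, 0]
      (List.replicate a 0 ++ List.replicate c 2 ++ List.replicate (r + 1) 1 ++ z) (by decide)
      (.refl _)

lemma energy_le_of_irreducible_append_middle {y : List (Fin 3)} (k p q : ℕ)
    (hy : y.head? ≠ some 1) (hI : T.Irreducible ([1, 0, 0, 1, 2, 2, 1, 0, 0, 1, 1] ++ y)) :
    T.energy k p q y ≤ 204 := by
  obtain h | ⟨a, c, r, z, h, -, hac, -⟩ := T.energy_le_or_exists_block hy
    (Irreducible.of_append (x := [1, 0, 0, 1, 2, 2, 1, 0, 0, 1]) hI)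
  · exact h k p q
  exfalso
  replace hI := hI.append_congr h
  rcases a with _ | a
  · obtain ⟨c, rfl⟩ : ∃ c', c = c' + 2 := ⟨c - 2, by omega⟩
    exact hI.false_of_factor [1, 0] [0, 1, 2, 2, 1, 0, 0, 1, 1, 2, 2]
      (List.replicate c 2 ++ List.replicate (r + 1) 1 ++ z) (by decide) (.refl _)
  · exact hI.false_of_factor [1, 0, 0] [1, 2, 2, 1, 0, 0, 1, 1, 0]
      (List.replicate a 0 ++ List.replicate c 2 ++ List.replicate (r + 1) 1 ++ z) (by decide)
      (.refl _)

lemma energy_le_of_irreducible_append_outer {y : List (Fin 3)} (k p q : ℕ)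
    (hy : y.head? ≠ some 1) (hI : T.Irreducible ([1, 0, 0, 1, 2, 2, 1, 0, 0, 0, 1] ++ y)) :
    T.energy k p q y ≤ 204 := by
  obtain h | ⟨a, c, r, z, h, -, hac, -⟩ := T.energy_le_or_exists_block hy
    (Irreducible.of_append (x := [1, 0, 0, 1, 2, 2, 1, 0, 0, 0]) hI)
  · exact h k p q
  exfalso
  replace hI := hI.append_congr h
  rcases a with _ | a
  · obtain ⟨c, rfl⟩ : ∃ c', c = c' + 2 := ⟨c - 2, by omega⟩
    rcases c with _ | c
    · exact hI.false_of_factor [] [1, 0, 0, 1, 2, 2, 1, 0, 0, 0, 1, 2, 2, 1]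
        (List.replicate r 1 ++ z) (by decide) (.refl _)
    · exact hI.false_of_factor [1, 0, 0] [1, 2, 2, 1, 0, 0, 0, 1, 2, 2, 2]
        (List.replicate c 2 ++ List.replicate (r + 1) 1 ++ z) (by decide) (.refl _)
  · exact hI.false_of_factor [1, 0, 0, 1, 2, 2, 1, 0, 0] [0, 1, 0]
      (List.replicate a 0 ++ List.replicate c 2 ++ List.replicate (r + 1) 1 ++ z) (by decide)
      (.refl _)

/-- The potential bound for irreducible continuations of length less than `n`. -/
def ScanBound (n : ℕ) : Prop :=
  ∀ (z : List (Fin 3)) (k p q : ℕ), z.length < n → z.head? ≠ some 1 → T.Irreducible (1 :: z) →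
    T.energy k p q z ≤ 213

variable {T}

lemma Irreducible.one_cons_of_block {s z : List (Fin 3)} {a c r : ℕ}
    (hI : T.Irreducible (s ++ (List.replicate a 0 ++ List.replicate c 2 ++
      List.replicate (r + 1) 1 ++ z))) : T.Irreducible (1 :: z) :=
  Irreducible.of_append (x := s ++ List.replicate a 0 ++ List.replicate c 2 ++
    List.replicate r 1) (by simpa [List.replicate_succ'] using hI)

lemma ScanBound.energy_block_le {s y z : List (Fin 3)} {a c r : ℕ}
    (hS : T.ScanBound y.length) (k p q : ℕ)
    (h : T.Equivalent y (List.replicate a 0 ++ List.replicate c 2 ++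
      List.replicate (r + 1) 1 ++ z)) (hz : z.head? ≠ some 1) (hac : 1 ≤ a + c)
    (hI : T.Irreducible (s ++ y)) :
    T.energy k p q y ≤ 237 - 7 * (r + 1 + a + c) := by
  obtain ⟨k', p', q', he⟩ := T.exists_energy_block_le k p q a c (r + 1) z (by omega) hac
  have hl := h.1
  simp only [List.length_append, List.length_replicate] at hl
  have := hS z k' p' q' (by omega) hz (hI.append_congr h).one_cons_of_block
  rw [h.energy_eq]
  push_cast at he; linarith

lemma ScanBound.energy_le_of_two_blocks {y : List (Fin 3)} (hS : T.ScanBound y.length)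
    (k p q : ℕ) (hy : y.head? ≠ some 1) (hI : T.Irreducible ([1, 0, 0, 1, 2, 2, 1] ++ y)) :
    T.energy k p q y ≤ 207 := by
  obtain h | ⟨a, c, r, z, h, hz, hac, -⟩ := T.energy_le_or_exists_block hy
    (Irreducible.of_append (x := [1, 0, 0, 1, 2, 2]) hI)
  · linarith [h k p q]
  have hb := hS.energy_block_le k p q h hz (by omega) hI
  have hI' := hI.append_congr h
  rcases c with _ | c
  · obtain ⟨a, rfl⟩ : ∃ a', a = a' + 2 := ⟨a - 2, by omega⟩
    by_cases hlarge : 2 ≤ a + r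
    · push_cast at hb; omega
    obtain ⟨k', p', q', he⟩ := T.exists_energy_block_le k p q (a + 2) 0 (r + 1) z
      (by omega) (by omega)
    rw [h.energy_eq]
    obtain ⟨rfl, rfl⟩ | ⟨rfl, rfl⟩ | ⟨rfl, rfl⟩ :
        (a = 0 ∧ r = 0) ∨ (a = 0 ∧ r = 1) ∨ (a = 1 ∧ r = 0) := by omega
    · have := T.energy_le_of_irreducible_append k' p' q' hz hI'
      refine he.trans ?_
      push_cast; linarith
    · have := T.energy_le_of_irreducible_append_middle k' p' q' hz hI'
      refine he.trans ?_
      push_cast; linarith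
    · have := T.energy_le_of_irreducible_append_outer k' p' q' hz hI'
      refine he.trans ?_
      push_cast; linarith
  · exfalso
    rw [List.append_assoc (_ ++ _)] at hI'
    replace hI' := hI'.append_congr (Equivalent.outer_comm T a (c + 1) _)
    exact hI'.false_of_factor [1, 0, 0, 1, 2] [2, 1, 2]
      (List.replicate c 2 ++ List.replicate a 0 ++ (List.replicate (r + 1) 1 ++ z)) (by decide)
      (.refl _)

lemma ScanBound.energy_le_of_one_block {y : List (Fin 3)} (hS : T.ScanBound y.length)
    (k p q : ℕ) (hy : y.head? ≠ some 1) (hI : T.Irreducible ([1, 0, 0, 1] ++ y)) :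
    T.energy k p q y ≤ 210 := by
  obtain h | ⟨a, c, r, z, h, hz, hac, -⟩ := T.energy_le_or_exists_block hy
    (Irreducible.of_append (x := [1, 0, 0]) hI)
  · linarith [h k p q]
  have hb := hS.energy_block_le k p q h hz (by omega) hI
  have hI' := hI.append_congr h
  rcases a with _ | a
  · obtain ⟨c, rfl⟩ : ∃ c', c = c' + 2 := ⟨c - 2, by omega⟩
    by_cases hlarge : 1 ≤ c + r
    · push_cast at hb; omega
    obtain ⟨rfl, rfl⟩ : c = 0 ∧ r = 0 := by omega
    obtain ⟨k', p', q', he⟩ := T.exists_energy_block_le k p q 0 2 1 z (by omega) (by omega)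
    rw [h.energy_eq]
    have hl := h.1
    simp only [List.length_append, List.length_replicate] at hl
    have hS' : T.ScanBound z.length := fun x k p q hx => hS x k p q (by omega)
    have := hS'.energy_le_of_two_blocks k' p' q' hz hI'
    refine he.trans ?_
    push_cast; linarith
  · exact (hI'.false_of_factor [1, 0] [0, 1, 0]
      (List.replicate a 0 ++ List.replicate c 2 ++ List.replicate (r + 1) 1 ++ z) (by decide)
      (.refl _)).elim

variable (T)

lemma scanBound (n : ℕ) : T.ScanBound n := by
  induction n generalizing T with
  | zero => exact fun z k p q hz => absurd hz (Nat.not_lt_zero _)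
  | succ n ih =>
    intro y k p q hn hy hI
    have hS (T : FourBraidSignature G) : T.ScanBound y.length :=
      fun x k p q hx => ih T x k p q (by omega)
    obtain h | ⟨a, c, r, z, h, hz, hac, h11⟩ := T.energy_le_or_exists_block hy hI
    · linarith [h k p q]
    have hb := (hS T).energy_block_le (s := [1]) k p q h hz (by omega) hI
    have hI' := Irreducible.append_congr (s := [1]) hI h
    by_cases hlarge : 3 ≤ a + c + r
    · omega
    have hl := h.1
    simp only [List.length_append, List.length_replicate] at hl
    obtain ⟨k', p', q', he⟩ := T.exists_energy_block_le k p q a c (r + 1) z (by omega) (by omega)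
    have hS' (T : FourBraidSignature G) : T.ScanBound z.length :=
      fun x k p q hx => hS T x k p q (by omega)
    rw [h.energy_eq]
    obtain ⟨rfl, rfl, rfl⟩ | ⟨rfl, rfl, rfl⟩ :
        (a = 2 ∧ c = 0 ∧ r = 0) ∨ (a = 0 ∧ c = 2 ∧ r = 0) := by omega
    · have := (hS' T).energy_le_of_one_block k' p' q' hz hI'
      refine he.trans ?_
      push_cast; linarith
    · have hzr : (z.map Fin.rev).head? ≠ some 1 := by
        rcases z with _ | ⟨x, z⟩
        · simp
        · revert hz; clear hI' h he; fin_cases x <;> simp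
      have hS'' := hS' T.flip
      rw [← List.length_map (f := Fin.rev)] at hS''
      have := hS''.energy_le_of_one_block k' q' p' hzr hI'.map_rev
      rw [energy_flip] at this
      refine he.trans ?_
      push_cast; linarith

variable {T} in
lemma Irreducible.energy_le {y : List (Fin 3)} (hI : T.Irreducible y) (k p q : ℕ) :
    T.energy k p q y ≤ 230 := by
  obtain ⟨a, c, r, z, h, hz, hr, -, -⟩ := T.exists_block y
  rw [h.energy_eq]
  rcases r with _ | r
  · obtain rfl := hr rfl
    rw [List.append_assoc (_ ++ _), energy_outer]
    have := T.energy_nil_le k (p + a) (q + c)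
    simp only [List.replicate_zero, List.append_nil]
    linarith
  · have hz' : T.Irreducible (1 :: z) := Irreducible.one_cons_of_block (s := []) (hI.congr h)
    rw [List.append_assoc (_ ++ _), energy_outer]
    obtain ⟨k', p', q', he⟩ := T.exists_energy_middle_block_le k (p + a + 1) (q + c) (r + 1) z
      (by omega) (by omega)
    have h1 := T.energy_le_insert k (p + a) (q + c) (List.replicate (r + 1) 1 ++ z)
    have := T.scanBound _ z k' p' q' (Nat.lt_succ_self _) hz hz'
    push_cast at he; linarith

/-! ### Reduction to irreducible words -/

lemma exists_energy_le_of_occurs {u y : List (Fin 3)} (hu : u ∈ reducibleWords)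
    (h : T.Occurs u y) (k : ℕ) :
    ∃ k' z, z.length < y.length ∧ T.energy k 0 0 y ≤ T.energy k' 0 0 z := by
  obtain ⟨s, t, hst⟩ := h
  obtain ⟨n, e, v, hc, hn, hv⟩ := T.reducible_of_mem hu
  obtain ⟨s', hs', hs⟩ := T.eval_mul_garside_pow e s
  have hl := hst.1
  simp only [List.length_append] at hl
  refine ⟨k + e, s' ++ v ++ t, by simp only [List.length_append]; omega, ?_⟩
  have h1 := hc (T.garside ^ k * T.eval s) (T.eval t)
  have h2 : T.garside ^ k * T.eval s * (T.garside ^ e * T.eval v) * T.eval t =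
      T.garside ^ (k + e) * T.eval (s' ++ v ++ t) := by
    rw [pow_add, eval_append, eval_append, mul_assoc (_ ^ k), ← mul_assoc (T.eval s), hs]
    simp only [mul_assoc]
  rw [h2] at h1
  rw [← hst.energy_eq]
  simp only [energy, pow_zero, mul_one, List.length_append, eval_append, ← mul_assoc] at *
  push_cast; omega

lemma exists_halfTwist_mul_eval (t : List (Fin 3)) (ht : 2 ∉ t) :
    ∃ t' : List (Fin 3), t'.length = t.length ∧
      T.halfTwist * T.eval t = T.eval t' * T.halfTwist ∧
      T.eval t * T.halfTwist = T.halfTwist * T.eval t' := by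
  induction t with
  | nil => exact ⟨[], rfl, by simp⟩
  | cons x t ih =>
    obtain ⟨t', hl, h1, h2⟩ := ih fun h => ht (List.mem_cons_of_mem _ h)
    obtain ⟨x', h3, h4⟩ : ∃ x', SemiconjBy T.halfTwist (T.gen x) (T.gen x') ∧
        SemiconjBy T.halfTwist (T.gen x') (T.gen x) := by
      obtain rfl | rfl : x = 0 ∨ x = 1 := by
        have : x ≠ 2 := fun h => ht (h ▸ List.mem_cons_self)
        revert this; clear ht; revert x; decide
      exacts [⟨1, T.semiconj_halfTwist_zero, T.semiconj_halfTwist_one⟩,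
        ⟨0, T.semiconj_halfTwist_one, T.semiconj_halfTwist_zero⟩]
    refine ⟨x' :: t', by simp [hl], ?_, ?_⟩
    · rw [eval_cons, eval_cons, ← mul_assoc, h3.eq, mul_assoc, h1, mul_assoc]
    · rw [eval_cons, eval_cons, mul_assoc, h2, ← mul_assoc, ← h4.eq, mul_assoc]

lemma eval_halfTwist : T.eval [0, 1, 0] = T.halfTwist := by
  simp [halfTwist, mul_assoc]

variable {T} in
lemma Occurs.of_halfTwist {y : List (Fin 3)} (h : T.Occurs [0, 1, 0] y) :
    (∃ z, 2 ∉ z ∧ T.Equivalent z y) ∨ T.Occurs [0, 1, 0, 2] y ∨ T.Occurs [2, 0, 1, 0] y := by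
  obtain ⟨s, t, hst⟩ := h
  by_cases ht : 2 ∈ t
  · right; left
    obtain ⟨t₁, t₂, rfl, ht₁⟩ := List.eq_append_cons_of_mem ht
    obtain ⟨t', hl, h1, -⟩ := T.exists_halfTwist_mul_eval t₁ ht₁
    refine ⟨s ++ t', t₂, .trans ⟨by simp [hl]; omega, ?_⟩ hst⟩
    rw [show [0, 1, 0, 2] = [0, 1, 0] ++ [(2 : Fin 3)] from rfl]
    simp only [eval_append]
    rw [eval_halfTwist]
    simp only [eval_cons, eval_nil, mul_one]
    rw [mul_assoc (T.eval s), ← mul_assoc (T.eval t'), ← h1]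
    simp only [mul_assoc]
  by_cases hs : 2 ∈ s
  · right; right
    obtain ⟨s₂, s₁, hs', hs₂⟩ := List.eq_append_cons_of_mem (List.mem_reverse.2 hs)
    obtain rfl : s = s₁.reverse ++ 2 :: s₂.reverse := by
      simpa using congrArg List.reverse hs'
    obtain ⟨s', hl, -, h2⟩ := T.exists_halfTwist_mul_eval s₂.reverse (by simpa using hs₂)
    refine ⟨s₁.reverse, s' ++ t, .trans ⟨by simp [hl]; omega, ?_⟩ hst⟩
    rw [show [2, 0, 1, 0] = [(2 : Fin 3)] ++ [0, 1, 0] from rfl]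
    simp only [eval_append]
    rw [eval_halfTwist]
    simp only [eval_cons, eval_nil, mul_one]
    rw [mul_assoc (T.eval s₁.reverse) _ T.halfTwist,
      mul_assoc (T.gen 2) (T.eval _), h2]
    simp only [mul_assoc]
  · exact .inl ⟨s ++ [0, 1, 0] ++ t, by simp [hs, ht], hst⟩

lemma energy_le_of_three_strand {z : List (Fin 3)} (hz : 2 ∉ z) (k : ℕ) :
    T.energy k 0 0 z ≤ 312 := by
  have h1 := T.three_strand_sig_le z hz
  have h2 := T.sig_mul_le (T.garside ^ k) (T.eval z)
  have h3 := T.sig_garside_pow_le k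
  simp only [energy, pow_zero, mul_one]
  push_cast; omega

lemma energy_le_of_occurs {u y : List (Fin 3)} (hu : u ∈ [0, 1, 0] :: reducibleWords)
    (h : T.Occurs u y)
    (ih : ∀ (z : List (Fin 3)) (k : ℕ), z.length < y.length → T.energy k 0 0 z ≤ 312) (k : ℕ) :
    T.energy k 0 0 y ≤ 312 := by
  have key {v : List (Fin 3)} (hv : v ∈ reducibleWords) (ho : T.Occurs v y) :
      T.energy k 0 0 y ≤ 312 := by
    obtain ⟨k', z, hz, he⟩ := T.exists_energy_le_of_occurs hv ho k
    exact he.trans (ih z k' hz)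
  rcases List.mem_cons.1 hu with rfl | hu
  · obtain ⟨z, hz, hzy⟩ | h | h := h.of_halfTwist
    · exact hzy.energy_eq k 0 0 ▸ T.energy_le_of_three_strand hz k
    · exact key (by decide) h
    · exact key (by decide) h
  · exact key hu h

lemma energy_le (y : List (Fin 3)) (k : ℕ) : T.energy k 0 0 y ≤ 312 := by
  induction hn : y.length using Nat.strong_induction_on generalizing T y k with
  | _ n ih =>
    by_cases hI : T.Irreducible y
    · linarith [hI.energy_le k 0 0]
    · simp only [Irreducible, not_forall, not_and_or, not_not] at hI
      obtain ⟨u, hu, h | h⟩ := hI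
      · exact T.energy_le_of_occurs hu h (fun z k hz => ih _ (hn ▸ hz) T z k rfl) k
      · rw [← energy_flip]
        refine T.flip.energy_le_of_occurs hu ?_
          (fun z k hz => ih _ (by simpa [hn] using hz) T.flip z k rfl) k
        simpa only [map_rev_map_rev] using h.map_rev

/-! ### Bounds for all positive words -/

lemma pow_sig_le (x : G) (n : ℕ) : (n + 1) * T.sig x ≤ T.sig (x ^ (n + 1)) + 3 * n := by
  induction n with
  | zero => simp
  | succ n ih =>
    have := T.sig_add_le (x ^ (n + 1)) x
    rw [← pow_succ] at this
    push_cast; linarith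

/-- A bound on the growth of the signature of powers bounds the signature itself. -/
lemma sig_le_of_forall_pow {x : G} {a b C : ℤ} (ha : 0 ≤ a)
    (h : ∀ n : ℕ, a * T.sig (x ^ n) + b * n ≤ C) : a * T.sig x + b ≤ 3 * a := by
  by_contra! hlt
  obtain ⟨n, hn⟩ : ∃ n : ℕ, C ≤ n := ⟨C.natAbs, Int.le_natAbs⟩
  have h1 := mul_le_mul_of_nonneg_left (T.pow_sig_le x n) ha
  have h2 := h (n + 1)
  have h3 : (0 : ℤ) ≤ (n + 1) * (a * T.sig x + b - 3 * a - 1) :=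
    mul_nonneg (by positivity) (by linarith)
  push_cast at h2
  linarith

/-- The concatenation of `n` copies of a word represents the `n`-th power. -/
lemma eval_flatten_replicate (w : List (Fin 3)) (n : ℕ) :
    T.eval (List.replicate n w).flatten = T.eval w ^ n := by
  induction n with
  | zero => simp
  | succ n ih => rw [List.replicate_succ, List.flatten_cons, eval_append, ih, pow_succ']

lemma sig_eval_le (w : List (Fin 3)) : 12 * T.sig (T.eval w) + 5 * w.length ≤ 36 := by
  refine T.sig_le_of_forall_pow (C := 312) (by norm_num) fun n => ?_
  have := T.energy_le (List.replicate n w).flatten 0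
  simp only [energy, pow_zero, one_mul, eval_flatten_replicate, List.length_flatten,
    List.map_replicate, List.sum_replicate, smul_eq_mul] at this
  push_cast at this; linarith

lemma sig_eval_le_of_three_strand {w : List (Fin 3)} (hw : 2 ∉ w) :
    2 * T.sig (T.eval w) + w.length ≤ 6 := by
  refine T.sig_le_of_forall_pow (a := 2) (C := 28) (by norm_num) fun n => ?_
  have := T.three_strand_sig_le (List.replicate n w).flatten
    (by simp only [List.mem_flatten, List.mem_replicate]; rintro ⟨_, ⟨-, rfl⟩, h⟩; exact hw h)
  simp only [eval_flatten_replicate, List.length_flatten,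
    List.map_replicate, List.sum_replicate, smul_eq_mul] at this
  push_cast at this; linarith

lemma sig_eval_le_of_outer {w : List (Fin 3)} (hw : 1 ∉ w) :
    T.sig (T.eval w) + w.length ≤ 3 := by
  obtain ⟨a, c, hl, he⟩ : ∃ a c : ℕ, w.length = a + c ∧
      T.eval w = T.gen 0 ^ a * T.gen 2 ^ c := by
    induction w with
    | nil => exact ⟨0, 0, by simp⟩
    | cons x w ih =>
      obtain ⟨a, c, hl, he⟩ := ih fun h => hw (List.mem_cons_of_mem _ h)
      fin_cases x
      · exact ⟨a + 1, c, by simp [hl]; omega, by simp [he, pow_succ', mul_assoc]⟩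
      · simp at hw
      · refine ⟨a, c + 1, by simp [hl]; omega, ?_⟩
        have hc : T.gen 2 * T.gen 0 ^ a = T.gen 0 ^ a * T.gen 2 :=
          (T.commute_zero_two.pow_left a).eq.symm
        change T.eval (2 :: w) = _
        rw [eval_cons, he, ← mul_assoc, hc, mul_assoc, pow_succ']
  have := T.sig_le_of_forall_pow (x := T.eval w) (a := 1) (b := w.length) (C := 5) (by norm_num)
    fun n => by
      rw [he, (T.commute_zero_two.pow_pow a c).mul_pow, ← pow_mul, ← pow_mul]
      have := T.sig_outer_le (a * n) (c * n)
      rw [hl]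
      push_cast at *; linarith
  linarith

lemma sig_le_of_edits {w : List (Fin 3)} (os : List Edit) (i : Fin 3) (m : ℕ)
    (h : os.foldl (fun v o => o.apply v) w = List.replicate m i) :
    T.sig (T.eval w) ≤ 1 - m + (os.map Edit.cost).sum := by
  have h1 := (T.costLe_edits os w).sig_le
  rw [h, eval_replicate] at h1
  linarith [T.sig_pow_le i m]

lemma sig_eval_le_of_length_four {w : List (Fin 3)} (hl : w.length = 4) (h0 : 0 ∈ w)
    (h1 : 1 ∈ w) (h2 : 2 ∉ w) : T.sig (T.eval w) ≤ 0 := by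
  obtain ⟨x, y, z, t, rfl⟩ : ∃ x y z t, [x, y, z, t] = w := by
    simpa [List.length_eq_succ_iff] using hl
  have key : ∀ x y z t : Fin 3, 0 ∈ [x, y, z, t] → 1 ∈ [x, y, z, t] → 2 ∉ [x, y, z, t] →
      ∃ os ∈ ([[.del 0], [.del 1], [.del 2], [.del 3], [.rel 1, .del 2],
        [.ins 1 1, .rel 1, .rel 2, .del 3], [.ins 1 0, .rel 1, .rel 2, .del 3],
        [.ins 2 0, .rel 1, .del 2], [.ins 2 1, .rel 1, .del 2]] : List (List Edit)),
      ∃ i : Fin 3, ∃ m < 5, os.foldl (fun v o => o.apply v) [x, y, z, t] = List.replicate m i ∧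
        1 + (os.map Edit.cost).sum ≤ m := by decide +kernel
  obtain ⟨os, -, i, m, -, h, hm⟩ := key x y z t h0 h1 h2
  have := T.sig_le_of_edits os i m h
  omega

lemma sig_eval_le_of_zero_one {w : List (Fin 3)} (h0 : 0 ∈ w) (h1 : 1 ∈ w) (h2 : 2 ∉ w) :
    12 * T.sig (T.eval w) + 5 * w.length ≤ 31 := by
  have h := T.sig_eval_le_of_three_strand h2
  rcases w with _ | ⟨x, _ | ⟨y, _ | ⟨z, w⟩⟩⟩
  · simp at h0
  · simp at h0 h1; omega
  · have h3 := T.sig_le_of_edits [.del 0] y 1 (w := [x, y]) rfl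
    simp [Edit.cost] at h3 ⊢; linarith
  · by_cases h4 : w.length = 1
    · have := T.sig_eval_le_of_length_four (by simpa using h4) h0 h1 h2
      simp only [List.length_cons] at *; push_cast; omega
    · simp only [List.length_cons] at *; push_cast at *; omega

/-- The signature bound for positive words, corrected by the number of missing generators. -/
lemma sig_eval_add_le (w : List (Fin 3)) :
    12 * T.sig (T.eval w) + 5 * w.length +
      5 * (Finset.univ.filter (fun i : Fin 3 => i ∉ w)).card ≤ 36 := by
  rw [Finset.card_filter, Fin.sum_univ_three]
  have hmono (i : Fin 3) (h : ∀ x ∈ w, x = i) :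
      12 * T.sig (T.eval w) + 5 * w.length ≤ 12 ∧
      12 * T.sig (T.eval w) + 12 * w.length ≤ 12 := by
    have hw := List.eq_replicate_of_mem h
    have := T.sig_pow_le i w.length
    rw [← eval_replicate, ← hw] at this
    constructor <;> linarith
  have hF (h0 : 0 ∉ w) (h1 : 1 ∈ w) (h2 : 2 ∈ w) :
      12 * T.sig (T.eval w) + 5 * w.length ≤ 31 := by
    have := T.flip.sig_eval_le_of_zero_one (w := w.map Fin.rev)
      (List.mem_map.2 ⟨2, h2, rfl⟩) (List.mem_map.2 ⟨1, h1, rfl⟩)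
      (fun h => by
        obtain ⟨x, hx, hx'⟩ := List.mem_map.1 h
        exact h0 ((by revert hx'; clear hx h; revert x; decide : x = 0) ▸ hx))
    rwa [flip_eval_map, List.length_map] at this
  have hall : ∀ x ∈ w, x = 0 ∨ x = 1 ∨ x = 2 := fun x _ => by clear * -; revert x; decide
  by_cases h0 : 0 ∈ w <;> by_cases h1 : 1 ∈ w <;> by_cases h2 : 2 ∈ w <;>
    simp only [h0, h1, h2, not_true_eq_false, not_false_eq_true, if_true, if_false] <;> push_cast
  · linarith [T.sig_eval_le w]
  · linarith [T.sig_eval_le_of_zero_one h0 h1 h2]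
  · have := T.sig_eval_le_of_outer h1
    have := List.length_pos_of_mem h0
    omega
  · have := hmono 0 (by grind)
    omega
  · linarith [hF h0 h1 h2]
  · have := hmono 1 (by grind)
    omega
  · have := hmono 2 (by grind)
    omega
  · have := hmono 0 (by grind)
    omega

end FourBraidSignature

/-- The signature of closures of braids on four strands. -/
def BraidLinkInvariants.fourBraidSignature (S : BraidLinkInvariants) :
    FourBraidSignature (BraidGroup 4) where
  gen := braidGen 4
  gen_comm := (PresentedGroup.mk_eq_mk_of_mul_inv_mem (rels := braidRels 4)
    (x := FreeGroup.of (0 : Fin 3) * FreeGroup.of (2 : Fin 3))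
    (y := FreeGroup.of (2 : Fin 3) * FreeGroup.of (0 : Fin 3))
    (.inl ⟨(0 : Fin 3), (2 : Fin 3), by decide, by rw [mul_inv_rev, mul_assoc _ _ (_⁻¹)]⟩)).symm
  braid_zero_one := (PresentedGroup.mk_eq_mk_of_mul_inv_mem (rels := braidRels 4)
    (.inr ⟨(0 : Fin 3), (1 : Fin 3), rfl, rfl⟩)).symm
  braid_one_two := (PresentedGroup.mk_eq_mk_of_mul_inv_mem (rels := braidRels 4)
    (.inr ⟨(1 : Fin 3), (2 : Fin 3), rfl, rfl⟩)).symm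
  sig := S.sigma 4
  sig_conj := S.sigma_conj 4
  sig_pow_le i n := by
    rcases n with _ | n
    · simp [S.sigma_one]
    · exact (S.sigma_gen_pow 4 i (n + 1) (by omega)).le
  sig_le_insert x y i := by
    have := (abs_le.1 (S.sigma_insert 4 x y i)).1
    linarith
  sig_insert_le x y i := by
    have := (abs_le.1 (S.sigma_insert 4 x y i)).2
    linarith
  sig_mul_le x y := by
    have := (abs_le.1 (S.sigma_quasi 4 (by norm_num) x y)).2
    norm_num at this; linarith
  sig_add_le x y := by
    have := (abs_le.1 (S.sigma_quasi 4 (by norm_num) x y)).1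
    norm_num at this; linarith

/-- **Corollary** (Feller): for every positive braid `β` on `4` strands,
`-σ(β) ≥ (5/12)·b₁(β) - 7/4`. -/
theorem neg_sigma_ge_five_twelfths_betti_sub (S : BraidLinkInvariants)
    (w : List (Fin (4 - 1))) :
    (5 / 12 : ℝ) * (S.betti 4 (wordProd 4 w) : ℝ) - 7 / 4
      ≤ -(S.sigma 4 (wordProd 4 w) : ℝ) := by
  have h : 12 * S.sigma 4 (wordProd 4 w) + 5 * (w.length : ℤ) +
      5 * ((Finset.univ.filter (fun i : Fin (4 - 1) => i ∉ w)).card : ℤ) ≤ 36 :=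
    S.fourBraidSignature.sig_eval_add_le w
  have hb := S.betti_eq 4 (by norm_num) w
  have h' : 12 * S.sigma 4 (wordProd 4 w) + 5 * (S.betti 4 (wordProd 4 w) : ℤ) ≤ 21 := by
    push_cast at hb; linarith
  have h'' : (12 * S.sigma 4 (wordProd 4 w) + 5 * (S.betti 4 (wordProd 4 w)) : ℝ) ≤ 21 := by
    exact_mod_cast h'
  linarith
end

section
/- Let B be a positive braid of length 4 in the braid group B_4 on 4 strands. If B is not equal in B_4 to a_2 a_1 a_1 a_2 or to a_2 a_3 a_3 a_2, then there is a positive braid word of length 4 representing B into which one can insert two generators so that the resulting word of length 6 represents one of the braids Δ = a_1 a_3 a_2 a_1 a_3 a_2, L = a_1 a_2 a_3 a_1 a_2 a_3, or R = a_3 a_2 a_1 a_3 a_2 a_1 in B_4. -/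
/-- `β’` is obtained from the positive braid `β` by *adding a generator*: one chooses a
positive braid word for `β` and inserts one letter `a_i` somewhere in this word. -/
def AddGen (b : ℕ) (β β' : BraidGroup b) : Prop :=
  ∃ v w : List (Fin (b - 1)), wordProd b v = β ∧ wordProd b w = β' ∧
    w.length = v.length + 1 ∧ v.Sublist w

/-- Artin generators with indices at distance at least two commute. -/
theorem braidGen_mul_comm {b : ℕ} {i j : Fin (b - 1)} (h : (i : ℕ) + 2 ≤ j) :
    braidGen b i * braidGen b j = braidGen b j * braidGen b i := by
  have hrel : braidGen b i * braidGen b j * (braidGen b i)⁻¹ * (braidGen b j)⁻¹ = 1 :=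
    PresentedGroup.one_of_mem (rels := braidRels b) (Or.inl ⟨i, j, h, rfl⟩)
  rw [mul_inv_eq_one, mul_inv_eq_iff_eq_mul] at hrel
  exact hrel

/-- Consecutive Artin generators satisfy the braid relation. -/
theorem braidGen_braid {b : ℕ} {i j : Fin (b - 1)} (h : (j : ℕ) = i + 1) :
    braidGen b i * braidGen b j * braidGen b i =
      braidGen b j * braidGen b i * braidGen b j := by
  have hrel : braidGen b i * braidGen b j * braidGen b i *
      (braidGen b j * braidGen b i * braidGen b j)⁻¹ = 1 :=
    PresentedGroup.one_of_mem (rels := braidRels b) (Or.inr ⟨i, j, h, rfl⟩)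
  exact mul_inv_eq_one.mp hrel

theorem wordProd_cons (b : ℕ) (i : Fin (b - 1)) (w : List (Fin (b - 1))) :
    wordProd b (i :: w) = braidGen b i * wordProd b w := by
  simp [wordProd]

/-- Swap the first two letters of a word if they are far apart. -/
def commHead {n : ℕ} : List (Fin n) → List (Fin n)
  | i :: j :: t => if (i : ℕ) + 2 ≤ j ∨ (j : ℕ) + 2 ≤ i then j :: i :: t else i :: j :: t
  | w => w

/-- Apply the braid relation to the first three letters of a word if possible. -/
def braidHead {n : ℕ} : List (Fin n) → List (Fin n)
  | i :: j :: k :: t =>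
    if i = k ∧ ((j : ℕ) = i + 1 ∨ (i : ℕ) = j + 1) then j :: i :: j :: t else i :: j :: k :: t
  | w => w

/-- The words obtained from a word by applying at most one relation, at any position. -/
def rewrites {n : ℕ} : List (Fin n) → List (List (Fin n))
  | [] => []
  | i :: t => commHead (i :: t) :: braidHead (i :: t) :: (rewrites t).map (List.cons i)

/-- The words obtained from a list of words by applying at most `k` relations. -/
def iterRewrites {n : ℕ} : ℕ → List (List (Fin n)) → List (List (Fin n))
  | 0, s => s
  | k + 1, s => iterRewrites k (s ++ s.flatMap rewrites).dedup

theorem wordProd_commHead {b : ℕ} (w : List (Fin (b - 1))) :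
    wordProd b (commHead w) = wordProd b w := by
  unfold commHead
  split
  · split_ifs with h
    · simp only [wordProd_cons, ← mul_assoc]
      rcases h with h | h <;> rw [braidGen_mul_comm h]
    · rfl
  · rfl

theorem wordProd_braidHead {b : ℕ} (w : List (Fin (b - 1))) :
    wordProd b (braidHead w) = wordProd b w := by
  unfold braidHead
  split
  · split_ifs with h
    · obtain ⟨rfl, h⟩ := h
      simp only [wordProd_cons, ← mul_assoc]
      rcases h with h | h <;> rw [braidGen_braid h]
    · rfl
  · rfl

theorem wordProd_eq_of_mem_rewrites {b : ℕ} {v w : List (Fin (b - 1))} (h : v ∈ rewrites w) :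
    wordProd b v = wordProd b w := by
  induction w generalizing v with
  | nil => simp [rewrites] at h
  | cons i t ih =>
    simp only [rewrites, List.mem_cons, List.mem_map] at h
    obtain rfl | rfl | ⟨u, hu, rfl⟩ := h
    · exact wordProd_commHead _
    · exact wordProd_braidHead _
    · rw [wordProd_cons, wordProd_cons, ih hu]

theorem exists_wordProd_eq_of_mem_iterRewrites {b k : ℕ} {s : List (List (Fin (b - 1)))}
    {v : List (Fin (b - 1))} (h : v ∈ iterRewrites k s) :
    ∃ w ∈ s, wordProd b v = wordProd b w := by
  induction k generalizing s with
  | zero => exact ⟨v, h, rfl⟩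
  | succ k ih =>
    obtain ⟨u, hu, hvu⟩ := ih h
    rw [List.mem_dedup, List.mem_append, List.mem_flatMap] at hu
    obtain hu | ⟨w, hw, huw⟩ := hu
    · exact ⟨u, hu, hvu⟩
    · exact ⟨w, hw, hvu.trans (wordProd_eq_of_mem_rewrites huw)⟩

theorem wordProd_eq_of_mem_iterRewrites {b k : ℕ} {v w : List (Fin (b - 1))}
    (h : v ∈ iterRewrites k [w]) : wordProd b v = wordProd b w := by
  simpa using exists_wordProd_eq_of_mem_iterRewrites h

theorem List.Sublist.exists_length_succ {α : Type*} {v w : List α} (h : v.Sublist w)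
    (hlt : v.length < w.length) :
    ∃ u : List α, v.Sublist u ∧ u.Sublist w ∧ u.length = v.length + 1 := by
  induction h with
  | slnil => simp at hlt
  | @cons v w a h ih => exact ⟨a :: v, List.sublist_cons_self a v, h.cons_cons a, rfl⟩
  | @cons_cons v w a h ih =>
    obtain ⟨u, hvu, huw, hu⟩ := ih (by simpa using hlt)
    exact ⟨a :: u, hvu.cons_cons a, huw.cons_cons a, by simp [hu]⟩

/-- The braid words for `Δ`, `L` and `R`. -/
def targetWords : List (List (Fin (4 - 1))) :=
  [[0, 2, 1, 0, 2, 1], [0, 1, 2, 0, 1, 2], [2, 1, 0, 2, 1, 0]]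

/-- Apart from `a_1 ^ 4`, `a_3 ^ 4` and the two excluded words, every word with four letters is a
subword of a word for `Δ`, `L` or `R`. -/
theorem exists_sublist_targetWords (i j k l : Fin (4 - 1)) :
    [i, j, k, l] ∈ [[0, 0, 0, 0], [2, 2, 2, 2], [1, 0, 0, 1], [1, 2, 2, 1]] ∨
      ∃ w ∈ iterRewrites 8 targetWords, w.length = 6 ∧ [i, j, k, l].Sublist w := by
  revert i j k l
  decide +kernel

/-- **Lemma** (Feller): let `B` be a positive braid of length `4` in `B_4`.  If `B` is not
`a_2 a_1 a_1 a_2` or `a_2 a_3 a_3 a_2`, then one can add two generators to `B` so that it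
becomes one of `Δ = a_1 a_3 a_2 a_1 a_3 a_2`, `L = a_1 a_2 a_3 a_1 a_2 a_3`, or
`R = a_3 a_2 a_1 a_3 a_2 a_1`.  (Letters: `0 ↦ a_1`, `1 ↦ a_2`, `2 ↦ a_3`.) -/
theorem four_braid_length_four_add_two_generators (B : BraidGroup 4)
    (hpos : ∃ v : List (Fin (4 - 1)), v.length = 4 ∧ wordProd 4 v = B)
    (h1 : B ≠ wordProd 4 [1, 0, 0, 1])
    (h2 : B ≠ wordProd 4 [1, 2, 2, 1]) :
    ∃ β' γ : BraidGroup 4, AddGen 4 B β' ∧ AddGen 4 β' γ ∧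
      (γ = wordProd 4 [0, 2, 1, 0, 2, 1] ∨ γ = wordProd 4 [0, 1, 2, 0, 1, 2] ∨
        γ = wordProd 4 [2, 1, 0, 2, 1, 0]) := by
  obtain ⟨v, hv, rfl⟩ := hpos
  obtain ⟨i, j, k, l, rfl⟩ := List.length_eq_four.mp hv
  obtain h | ⟨w, hw, hlen, hsub⟩ := exists_sublist_targetWords i j k l
  · simp only [List.mem_cons, List.not_mem_nil, or_false] at h
    obtain h | h | h | h := h
    · rw [h]
      exact ⟨wordProd 4 [0, 0, 1, 0, 0], wordProd 4 [0, 1, 2, 0, 1, 0],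
        ⟨_, _, rfl, rfl, rfl, by decide⟩,
        ⟨[0, 1, 0, 1, 0], _, wordProd_eq_of_mem_iterRewrites (k := 3) (by decide +kernel),
          rfl, rfl, by decide⟩,
        Or.inl (wordProd_eq_of_mem_iterRewrites (k := 8) (by decide +kernel))⟩
    · rw [h]
      exact ⟨wordProd 4 [2, 2, 1, 2, 2], wordProd 4 [2, 1, 0, 2, 1, 2],
        ⟨_, _, rfl, rfl, rfl, by decide⟩,
        ⟨[2, 1, 2, 1, 2], _, wordProd_eq_of_mem_iterRewrites (k := 3) (by decide +kernel),
          rfl, rfl, by decide⟩,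
        Or.inl (wordProd_eq_of_mem_iterRewrites (k := 8) (by decide +kernel))⟩
    · exact absurd (congrArg (wordProd 4) h) h1
    · exact absurd (congrArg (wordProd 4) h) h2
  · obtain ⟨u, hvu, huw, hu⟩ := hsub.exists_length_succ (by simp [hlen])
    obtain ⟨t, ht, hwt⟩ := exists_wordProd_eq_of_mem_iterRewrites hw
    refine ⟨wordProd 4 u, wordProd 4 w, ⟨_, u, rfl, rfl, hu, hvu⟩,
      ⟨u, w, rfl, rfl, by simp [hlen, hu], huw⟩, ?_⟩
    simp only [targetWords, List.mem_cons, List.not_mem_nil, or_false] at ht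
    rw [hwt]
    exact ht.imp (congrArg _) (Or.imp (congrArg _) (congrArg _))
end
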